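/- Let G be the Frobenius group of order 20, realized as the semidirect product (ZMod 5) ⋊ (ZMod 5)ˣ where the unit group acts on ZMod 5 by multiplication (equivalently, G ≅ Sz(2) ≅ C5 : C4). A subgroup H ≤ G is a strong Gelfand subgroup of G if and only if H is one of: G itself, the unique subgroup of order 10 (isomorphic to D₁₀), the unique subgroup of order 5, or a subgroup of order 4. Equivalently, (G, H) is a strong Gelfand pair if and only if |H| ∈ {4, 5, 10, 20}. -/

import Mathlib

/-!
Let `χ` be an irreducible character of `F₂₀`, let `ψ` be one of `H`, and let `m` be the
multiplicity of `ψ` in `χ|H`. It is a natural number, the dimension of a space of intertwining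
maps (`charInner_eq_finrank`), and since `χ|H - mψ` has nonnegative norm,
`m² |H| ≤ ∑_{h ∈ H} |χ(h)|²` (`finrank_sq_mul_card_le`). The right-hand side is at most
`∑_{g} |χ(g)|² = 20`, so `m ≤ 1` as soon as `|H| ≥ 10`.

For the smaller subgroups the characters of `F₂₀` are needed. Either `|χ| = 1` everywhere, and the
same inequality gives `m ≤ 1`, or `χ = χ₄`, the character with value `4` at `1`, `-1` on the other
elements of `C₅` and `0` elsewhere (`normSq_char_or_eq_chi4`). If `|H| = 4`, then `H` meets `C₅`
trivially and `χ₄|H` is the regular character; if `|H| = 5`, then `H = C₅` and `χ₄|H` is the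
regular character minus the trivial one. As `H` is abelian, `ψ` has degree one, so `m ≤ 1` in both
cases (`charInner_chi4_le_one`).

Conversely, if `|H| ≤ 2`, then `χ₄` vanishes on `H` away from `1`, so the trivial character has
multiplicity `4 / |H| ≥ 2` in `χ₄|H`. That `χ₄` really is an irreducible character is shown by
inducing a nontrivial character of `C₅` to `F₂₀` (`rho4`).
-/

open CategoryTheory

/-- The standard inner product of two class functions / characters on a finite group. -/
noncomputable def charInner (H : Type) [Group H] [Finite H] (φ ψ : H → ℂ) : ℂ :=
  (Nat.card H : ℂ)⁻¹ * ∑ᶠ h : H, φ h * (starRingEnd ℂ) (ψ h)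

/-- `χ : G → ℂ` is an irreducible complex character of `G` if it is the character of some
simple (finite-dimensional) complex representation of `G`. -/
def IsIrredChar (G : Type) [Group G] (χ : G → ℂ) : Prop :=
  ∃ V : FDRep ℂ G, Simple V ∧ χ = V.character

/-- `(G, H)` is a strong Gelfand pair if every irreducible character of `H` occurs in the
restriction to `H` of every irreducible character of `G` with multiplicity at most 1. -/
def IsStrongGelfandPair (G : Type) [Group G] [Finite G] (H : Subgroup G) : Prop :=
  ∀ χ ψ, IsIrredChar G χ → IsIrredChar H ψ →
    charInner H (fun h : H => χ (h : G)) ψ = 0 ∨ charInner H (fun h : H => χ (h : G)) ψ = 1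

/-- The action of `(ZMod 5)ˣ` on `Multiplicative (ZMod 5)` by multiplication. -/
def φ20 : (ZMod 5)ˣ →* MulAut (Multiplicative (ZMod 5)) where
  toFun u := AddEquiv.toMultiplicative (DistribMulAction.toAddAut (ZMod 5)ˣ (ZMod 5) u)
  map_one' := by ext x; exact congrArg Multiplicative.ofAdd (one_smul (ZMod 5)ˣ x.toAdd)
  map_mul' u v := by ext x; exact congrArg Multiplicative.ofAdd (mul_smul u v x.toAdd)

/-- The Frobenius group of order 20, `F₂₀ ≅ Sz(2) ≅ C5 : C4`, realized as the semidirect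
product of `ZMod 5` by its unit group acting by multiplication. -/
abbrev F20 : Type := Multiplicative (ZMod 5) ⋊[φ20] (ZMod 5)ˣ

instance : Finite F20 :=
  Finite.of_injective (fun g : F20 => (g.left, g.right)) fun a b h => by
    cases a; cases b; simpa [Prod.ext_iff, SemidirectProduct.ext_iff] using h

/-! ### Characters of finite groups -/

section General

variable {G : Type} [Group G]

open scoped ComplexOrder in
/-- In a basis, the matrices of a representation are unitary for the averaged inner product, so
the matrix of `g⁻¹` is similar to the conjugate transpose of the matrix of `g`. -/
theorem char_inv_eq_conj [Finite G] (V : FDRep ℂ G) (g : G) :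
    V.character g⁻¹ = (starRingEnd ℂ) (V.character g) := by
  classical
  have := Fintype.ofFinite G
  let b := Module.finBasis ℂ V
  let A : G →* Matrix _ _ ℂ := (LinearMap.toMatrixAlgEquiv b).toMulEquiv.toMonoidHom.comp V.ρ
  have htr (x : G) : V.character x = (A x).trace := LinearMap.trace_eq_matrix_trace ℂ b (V.ρ x)
  -- `P` is the Gram matrix of a `G`-invariant inner product.
  let P := ∑ x : G, (A x).conjTranspose * A x
  have hP : P.PosDef := by
    have h1 : P = 1 + ∑ x ∈ Finset.univ.erase (1 : G), (A x).conjTranspose * A x := by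
      simp only [P]
      rw [← Finset.add_sum_erase _ _ (Finset.mem_univ (1 : G))]
      simp
    rw [h1]
    exact Matrix.PosDef.one.add_posSemidef
      (Matrix.posSemidef_sum _ fun x _ => Matrix.posSemidef_conjTranspose_mul_self _)
  have hinv : (A g).conjTranspose * P * A g = P := by
    simp only [P, Finset.mul_sum, Finset.sum_mul]
    refine Fintype.sum_equiv (Equiv.mulRight g) _ _ fun x => ?_
    simp [Matrix.conjTranspose_mul, Matrix.mul_assoc]
  have hu : IsUnit P.det := (Matrix.isUnit_iff_isUnit_det _).1 hP.isUnit
  have h2 : A g⁻¹ = P⁻¹ * ((A g).conjTranspose * P) := by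
    have h3 : (A g).conjTranspose * P = P * A g⁻¹ := by
      conv_rhs => rw [← hinv]
      rw [Matrix.mul_assoc _ (A g), ← map_mul, mul_inv_cancel, map_one, Matrix.mul_one]
    rw [h3, ← Matrix.mul_assoc, Matrix.nonsing_inv_mul _ hu, Matrix.one_mul]
  rw [htr, htr, h2, Matrix.trace_mul_comm, Matrix.mul_assoc, Matrix.mul_nonsing_inv _ hu,
    Matrix.mul_one, Matrix.trace_conjTranspose]
  rfl

theorem charInner_eq_finrank [Finite G] (V W : FDRep ℂ G) :
    charInner G V.character W.character = Module.finrank ℂ (W ⟶ V) := by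
  have := Fintype.ofFinite G
  have : Invertible (Nat.card G : ℂ) := invertibleOfNonzero (by simp)
  rw [← FDRep.scalar_product_char_eq_finrank_equivariant, charInner, finsum_eq_sum_of_fintype]
  simp only [char_inv_eq_conj]

theorem sum_normSq_of_simple [Fintype G] (V : FDRep ℂ G) [hV : Simple V] :
    ∑ g : G, Complex.normSq (V.character g) = Nat.card G := by
  have := (FDRep.simple_iff_char_is_norm_one V).1 hV
  simp only [char_inv_eq_conj, Complex.mul_conj] at this
  exact_mod_cast this

/-- If `χ`, `ψ` are the characters of `V`, `W` and `m` is the multiplicity of `W` in `V`, this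
expands `0 ≤ ∑ |χ - mψ|²`. -/
theorem finrank_sq_mul_card_le [Fintype G] (V W : FDRep ℂ G) [Simple W] :
    (Module.finrank ℂ (W ⟶ V) : ℝ) ^ 2 * Nat.card G ≤ ∑ g : G, Complex.normSq (V.character g) := by
  set m := Module.finrank ℂ (W ⟶ V) with hm
  have h1 := charInner_eq_finrank V W
  rw [charInner, finsum_eq_sum_of_fintype, inv_mul_eq_iff_eq_mul₀ (by simp), ← hm] at h1
  have h2 := sum_normSq_of_simple W
  have h3 : ∑ g : G, (V.character g * (starRingEnd ℂ) (W.character g)).re = Nat.card G * m := by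
    have := congrArg Complex.re h1
    rw [Complex.re_sum] at this
    rw [this]
    norm_cast
  have h0 : 0 ≤ ∑ g : G, Complex.normSq (V.character g - m * W.character g) :=
    Finset.sum_nonneg fun g _ => Complex.normSq_nonneg _
  have h4 (g : G) : Complex.normSq (V.character g - m * W.character g) =
      Complex.normSq (V.character g) + m ^ 2 * Complex.normSq (W.character g)
        - 2 * m * (V.character g * (starRingEnd ℂ) (W.character g)).re := by
    simp [Complex.normSq_apply]
    ring
  simp only [h4, Finset.sum_sub_distrib, Finset.sum_add_distrib, ← Finset.mul_sum, h2, h3] at h0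
  linarith

/-- The one-dimensional representation afforded by a homomorphism to `ℂ`. -/
noncomputable def linRep (l : G →* ℂ) : FDRep ℂ G :=
  FDRep.of (V := ℂ) (((Algebra.lmul ℂ ℂ : ℂ →ₐ[ℂ] Module.End ℂ ℂ) : ℂ →* Module.End ℂ ℂ).comp l)

theorem linRep_character (l : G →* ℂ) : (linRep l).character = l := by
  ext g
  change LinearMap.trace ℂ ℂ (LinearMap.mul ℂ ℂ (l g)) = l g
  exact Algebra.trace_self_apply (l g)

theorem linRep_simple [Finite G] (l : G →* ℂ) : Simple (linRep l) := by
  have := Fintype.ofFinite G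
  rw [FDRep.simple_iff_char_is_norm_one]
  simp only [linRep_character, ← map_mul, mul_inv_cancel, map_one]
  simp

/-- Restriction of a representation to a subgroup. -/
noncomputable def resRep (H : Subgroup G) (V : FDRep ℂ G) : FDRep ℂ H :=
  FDRep.of (V.ρ.comp H.subtype)

/-- By Schur's lemma every group element acts by a scalar, so the square of the degree `d` is
read off from `∑ χ(g) χ(g⁻¹) = |G| d²`. -/
theorem finrank_eq_one_of_comm [Finite G] (hG : ∀ x y : G, x * y = y * x)
    (V : FDRep ℂ G) [hV : Simple V] : Module.finrank ℂ V = 1 := by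
  have := Fintype.ofFinite G
  have hs (g : G) : ∃ c : ℂ, c • LinearMap.id = V.ρ g := by
    let f : V ⟶ V := ⟨Action.ρ V g, fun h => by
      have : Action.ρ V g * Action.ρ V h = Action.ρ V h * Action.ρ V g := by
        rw [← map_mul, ← map_mul, hG]
      exact this⟩
    obtain ⟨c, hc⟩ := (finrank_eq_one_iff_of_nonzero' (𝟙 V) (id_nonzero V)).1
      (finrank_endomorphism_simple_eq_one ℂ V) f
    refine ⟨c, ?_⟩
    have := congrArg (fun k : V ⟶ V => k.hom.hom.hom) hc
    exact this
  have hn := (FDRep.simple_iff_char_is_norm_one V).1 hV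
  have ht (g : G) : V.character g * V.character g⁻¹ = (Module.finrank ℂ V : ℂ) ^ 2 := by
    obtain ⟨c, hc⟩ := hs g
    obtain ⟨c', hc'⟩ := hs g⁻¹
    have h1 : c • c' • (LinearMap.id : V →ₗ[ℂ] V) = LinearMap.id := by
      have : V.ρ g * V.ρ g⁻¹ = 1 := by rw [← map_mul, mul_inv_cancel, map_one]
      rw [← hc, ← hc'] at this
      simpa [smul_smul, mul_comm, Module.End.mul_eq_comp, ← Module.End.one_eq_id] using this
    have h2 := congrArg (LinearMap.trace ℂ V) h1
    simp only [map_smul, LinearMap.trace_id, smul_eq_mul] at h2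
    rw [FDRep.character, FDRep.character, ← hc, ← hc']
    simp only [map_smul, LinearMap.trace_id, smul_eq_mul]
    linear_combination (Module.finrank ℂ V : ℂ) * h2
  simp only [ht, Finset.sum_const, Finset.card_univ, nsmul_eq_mul, ← Nat.card_eq_fintype_card] at hn
  have h3 : (Module.finrank ℂ V : ℂ) ^ 2 = 1 := by
    have : (Nat.card G : ℂ) ≠ 0 := by simp
    field_simp at hn
    simpa using hn
  have h4 : (Module.finrank ℂ V) ^ 2 = 1 := by exact_mod_cast h3
  simpa using h4

end General

/-! ### The irreducible characters of `F₂₀` -/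

section F20

/-- The element `x ↦ u x + a` of `F₂₀`, viewed as an affine map of `ZMod 5`. -/
abbrev el (a : ZMod 5) (u : (ZMod 5)ˣ) : F20 := ⟨Multiplicative.ofAdd a, u⟩

theorem el_mul (a b : ZMod 5) (u v : (ZMod 5)ˣ) : el a u * el b v = el (a + u * b) (u * v) := rfl

theorem el_one : el 0 1 = 1 := rfl

theorem el_inv (a : ZMod 5) (u : (ZMod 5)ˣ) : (el a u)⁻¹ = el (-((u⁻¹ : (ZMod 5)ˣ) * a)) u⁻¹ := by
  rw [inv_eq_iff_mul_eq_one, el_mul, ← el_one]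
  simp

noncomputable instance : Fintype F20 := Fintype.ofFinite _

theorem sum_F20 {M : Type} [AddCommMonoid M] (f : F20 → M) :
    ∑ g : F20, f g = ∑ u : (ZMod 5)ˣ, ∑ a : ZMod 5, f (el a u) := by
  rw [Fintype.sum_equiv SemidirectProduct.equivProd f
    (fun p : Multiplicative (ZMod 5) × (ZMod 5)ˣ => f ⟨p.1, p.2⟩) (fun _ => rfl),
    Fintype.sum_prod_type_right]
  rfl

theorem card_F20 : Nat.card F20 = 20 := by
  rw [SemidirectProduct.card]
  simp [Nat.totient_prime (show Nat.Prime 5 by norm_num)]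

/-- The irreducible character of degree `4`: its value is `4` at `1`, `-1` at the other
translations, and `0` elsewhere. -/
noncomputable def chi4 (g : F20) : ℂ :=
  if g.right = 1 then (if g.left = 1 then 4 else -1) else 0

theorem chi4_el (a : ZMod 5) (u : (ZMod 5)ˣ) :
    chi4 (el a u) = if u = 1 then (if a = 0 then 4 else -1) else 0 := rfl

theorem char_el_of_ne_one (V : FDRep ℂ F20) (a : ZMod 5) (u : (ZMod 5)ˣ) (hu : u ≠ 1) :
    V.character (el a u) = V.character (el 0 u) := by
  have hp : Fact (Nat.Prime 5) := ⟨by norm_num⟩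
  have h1 : (1 - (u : ZMod 5)) ≠ 0 := by
    rw [sub_ne_zero]; exact fun h => hu (Units.ext h.symm)
  -- Conjugation by `x ↦ x + c` takes `(0, u)` to `(c (1 - u), u)`.
  rw [← V.char_conj (el 0 u) (el (a / (1 - u)) 1), el_inv, el_mul, el_mul]
  congr 2
  · field_simp
    simp
    ring
  · simp

theorem char_el_one (V : FDRep ℂ F20) (a : ZMod 5) (ha : a ≠ 0) :
    V.character (el a 1) = V.character (el 1 1) := by
  have hp : Fact (Nat.Prime 5) := ⟨by norm_num⟩
  rw [← V.char_conj (el 1 1) (el 0 (Units.mk0 a ha)), el_inv, el_mul, el_mul]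
  congr 2
  · simp
  · simp

/-- The linear character of `F₂₀` inflated from a character of the quotient `(ZMod 5)ˣ`. -/
noncomputable def inflate (l : DirichletCharacter ℂ 5) : F20 →* ℂ :=
  (l.toMonoidHom.comp (Units.coeHom (ZMod 5))).comp SemidirectProduct.rightHom

theorem inflate_el (l : DirichletCharacter ℂ 5) (a : ZMod 5) (u : (ZMod 5)ˣ) :
    inflate l (el a u) = l u := rfl

/-- An irreducible character is either linear or equal to `chi4`. In the second case it is
orthogonal to the linear characters inflated from the quotient `(ZMod 5)ˣ`, so its sum over each
coset of `C₅` vanishes; being a class function of norm one, it is then determined. -/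
theorem normSq_char_or_eq_chi4 (V : FDRep ℂ F20) [hV : Simple V] :
    (∀ g, Complex.normSq (V.character g) = 1) ∨ V.character = chi4 := by
  have hp : Fact (Nat.Prime 5) := ⟨by norm_num⟩
  have hI : Invertible (Nat.card F20 : ℂ) := invertibleOfNonzero (by simp)
  by_cases hl : ∃ l : DirichletCharacter ℂ 5, Nonempty (V ≅ linRep (inflate l))
  · left
    obtain ⟨l, ⟨i⟩⟩ := hl
    intro g
    rw [FDRep.char_iso i, linRep_character, Complex.normSq_eq_norm_sq]
    change ‖l (g.right : ZMod 5)‖ ^ 2 = 1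
    rw [DirichletCharacter.unit_norm_eq_one l g.right, one_pow]
  right
  push Not at hl
  -- The sum of the character over the coset of `C₅` lying above `u`.
  let S (u : (ZMod 5)ˣ) : ℂ := ∑ a : ZMod 5, V.character (el a u)
  have hS (l : DirichletCharacter ℂ 5) : ∑ u : (ZMod 5)ˣ, S u * l (u⁻¹ : (ZMod 5)ˣ) = 0 := by
    have := linRep_simple (inflate l)
    have h := FDRep.char_orthonormal V (linRep (inflate l))
    rw [if_neg (not_nonempty_iff.2 (hl l)), mul_eq_zero_iff_left (inv_ne_zero (by simp)), sum_F20] at h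
    simp only [linRep_character, el_inv, inflate_el] at h
    simpa only [S, Finset.sum_mul] using h
  -- Inversion on the abelian group `(ZMod 5)ˣ`, by orthogonality of its characters.
  have hS0 (v : (ZMod 5)ˣ) : S v = 0 := by
    have h : ∑ l : DirichletCharacter ℂ 5, l v * ∑ u : (ZMod 5)ˣ, S u * l (u⁻¹ : (ZMod 5)ˣ) = 0 :=
      Finset.sum_eq_zero fun l _ => by rw [hS, mul_zero]
    simp only [Finset.mul_sum] at h
    rw [Finset.sum_comm] at h
    have h2 (u : (ZMod 5)ˣ) : ∑ l : DirichletCharacter ℂ 5, l v * (S u * l (u⁻¹ : (ZMod 5)ˣ)) =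
        if u = v then 4 * S v else 0 := by
      have := DirichletCharacter.sum_char_inv_mul_char_eq ℂ u.isUnit (v : ZMod 5)
      rw [← Units.val_inv_eq_inv_val] at this
      calc _ = S u * ∑ l : DirichletCharacter ℂ 5, l (u⁻¹ : (ZMod 5)ˣ) * l v := by
            rw [Finset.mul_sum]; exact Finset.sum_congr rfl fun l _ => by ring
        _ = _ := by
            rw [this]
            simp only [Units.val_inj]
            split_ifs with huv
            · rw [huv, Nat.totient_prime hp.out]; push_cast; ring
            · simp
    simp only [h2, Finset.sum_ite_eq', Finset.mem_univ, if_true] at h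
    simpa using h
  have hne (a : ZMod 5) (u : (ZMod 5)ˣ) (hu : u ≠ 1) : V.character (el a u) = 0 := by
    have h := hS0 u
    simp only [S, char_el_of_ne_one V _ u hu, Finset.sum_const, Finset.card_univ, ZMod.card] at h
    rw [char_el_of_ne_one V a u hu]
    simpa using h
  have hsplit (f : ZMod 5 → ℝ) (c : ℝ) (hf : ∀ a ≠ 0, f a = c) : ∑ a, f a = f 0 + 4 * c := by
    rw [← Finset.add_sum_erase _ _ (Finset.mem_univ (0 : ZMod 5)),
      Finset.sum_congr rfl fun a ha => hf a (Finset.ne_of_mem_erase ha)]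
    simp
  have hd : V.character (el 0 1) = Module.finrank ℂ V := V.char_one
  set d := Module.finrank ℂ V
  have hα : (d : ℂ) + 4 * V.character (el 1 1) = 0 := by
    have h := hS0 1
    simp only [S] at h
    rw [← Finset.add_sum_erase _ _ (Finset.mem_univ (0 : ZMod 5)),
      Finset.sum_congr rfl fun a ha => char_el_one V a (Finset.ne_of_mem_erase ha), hd] at h
    simpa using h
  have hα' : V.character (el 1 1) = ((-(d : ℝ) / 4 : ℝ) : ℂ) := by
    push_cast
    linear_combination hα / 4
  have hn := sum_normSq_of_simple V
  rw [sum_F20, Finset.sum_eq_single 1 (fun u _ hu => Finset.sum_eq_zero fun a _ => by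
    rw [hne a u hu, map_zero]) (by simp),
    hsplit _ _ (fun a ha => by rw [char_el_one V a ha]), hα', hd, card_F20,
    Complex.normSq_ofReal, Complex.normSq_natCast] at hn
  have hd4 : d = 4 := by
    have : (d : ℝ) * d = 4 * 4 := by push_cast at hn; linarith
    have : d * d = 4 * 4 := by exact_mod_cast this
    nlinarith
  rw [hd4] at hα' hd
  ext ⟨a, u⟩
  change V.character (el a.toAdd u) = chi4 (el a.toAdd u)
  rw [chi4_el]
  split_ifs with hu ha
  · rw [hu, ha, hd]; norm_num
  · rw [hu, char_el_one V _ ha, hα']; norm_num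
  · exact hne _ u hu

/-- The representation of `F₂₀` induced from the standard character `e` of `C₅`, realized on
functions on `(ZMod 5)ˣ`: the map `x ↦ u x + a` sends `f` to `x ↦ e(a x) f(x u)`. -/
noncomputable def rho4 : Representation ℂ F20 ((ZMod 5)ˣ → ℂ) where
  toFun g :=
    { toFun := fun f x => ZMod.stdAddChar (g.left.toAdd * (x : ZMod 5)) * f (x * g.right)
      map_add' := fun f f' => by ext x; simp [mul_add]
      map_smul' := fun c f => by ext x; simp; ring }
  map_one' := by
    apply LinearMap.ext; intro f; ext x; simp
  map_mul' := by
    rintro ⟨a, u⟩ ⟨b, v⟩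
    apply LinearMap.ext; intro f; ext x
    change ZMod.stdAddChar ((a.toAdd + (u : ZMod 5) * b.toAdd) * (x : ZMod 5)) * f (x * (u * v)) =
      ZMod.stdAddChar (a.toAdd * (x : ZMod 5)) *
        (ZMod.stdAddChar (b.toAdd * ((x * u : (ZMod 5)ˣ) : ZMod 5)) * f (x * u * v))
    rw [← mul_assoc x u v, ← mul_assoc (ZMod.stdAddChar _), ← AddChar.map_add_eq_mul]
    congr 2
    push_cast
    ring

theorem rho4_character : (FDRep.of rho4).character = chi4 := by
  have hp : Fact (Nat.Prime 5) := ⟨by norm_num⟩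
  ext ⟨a, u⟩
  change LinearMap.trace ℂ ((ZMod 5)ˣ → ℂ) (rho4 (el a.toAdd u)) = chi4 (el a.toAdd u)
  generalize a.toAdd = a
  rw [LinearMap.trace_eq_matrix_trace ℂ (Pi.basisFun ℂ (ZMod 5)ˣ), chi4_el, Matrix.trace]
  have h (x : (ZMod 5)ˣ) : (LinearMap.toMatrix (Pi.basisFun ℂ (ZMod 5)ˣ)
      (Pi.basisFun ℂ (ZMod 5)ˣ) (rho4 (el a u))).diag x =
      if u = 1 then ZMod.stdAddChar (a * (x : ZMod 5)) else 0 := by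
    rw [Matrix.diag_apply, LinearMap.toMatrix_apply]
    simp [rho4, Pi.single_apply]
  simp only [h]
  split_ifs with hu ha
  · simp [ha, Nat.totient_prime hp.out]
  · have h1 : ∑ x : ZMod 5, ZMod.stdAddChar (a * x) = (0 : ℂ) := by
      have := AddChar.sum_mulShift a (ZMod.isPrimitive_stdAddChar 5)
      rw [if_neg ha] at this
      simpa [mul_comm] using this
    have h2 : ∑ x : (ZMod 5)ˣ, (ZMod.stdAddChar (a * (x : ZMod 5)) : ℂ) =
        ∑ x ∈ Finset.univ.erase (0 : ZMod 5), ZMod.stdAddChar (a * x) := by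
      refine Finset.sum_bij (fun x _ => (x : ZMod 5)) (by simp) (fun x _ y _ h => Units.ext h)
        (fun y hy => ⟨Units.mk0 y (Finset.ne_of_mem_erase hy), by simp, rfl⟩) (fun _ _ => rfl)
    rw [h2]
    rw [← Finset.add_sum_erase _ _ (Finset.mem_univ (0 : ZMod 5))] at h1
    simp only [mul_zero, AddChar.map_zero_eq_one] at h1
    linear_combination h1
  · simp

theorem rho4_simple : Simple (FDRep.of rho4) := by
  rw [FDRep.simple_iff_char_is_norm_one, card_F20, sum_F20,
    Finset.sum_eq_single 1 (fun u _ hu => Finset.sum_eq_zero fun a _ => by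
      rw [rho4_character, chi4_el, if_neg hu, zero_mul]) (by simp)]
  simp only [rho4_character, el_inv, chi4_el]
  rw [← Finset.add_sum_erase _ _ (Finset.mem_univ (0 : ZMod 5)),
    Finset.sum_congr rfl (g := fun _ => (1 : ℂ)) fun a ha => by
      simp [Finset.ne_of_mem_erase ha]]
  simp
  norm_num

/-! ### Strong Gelfand subgroups -/

theorem chi4_one : chi4 1 = 4 := by
  rw [← el_one, chi4_el, if_pos rfl, if_pos rfl]

theorem chi4_of_coprime (H : Subgroup F20) (hH : (Nat.card H).Coprime 5) (g : F20) (hg : g ∈ H)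
    (hg1 : g ≠ 1) : chi4 g = 0 := by
  refine if_neg fun hu => hg1 ?_
  obtain ⟨a, rfl⟩ : ∃ a, SemidirectProduct.inl a = g :=
    ⟨g.left, SemidirectProduct.ext rfl hu.symm⟩
  have h5 : (SemidirectProduct.inl a : F20) ^ 5 = 1 := by
    have : a ^ 5 = 1 := by
      have h := pow_card_eq_one' (x := a)
      rwa [show Nat.card (Multiplicative (ZMod 5)) = 5 from Nat.card_zmod 5] at h
    rw [← map_pow, this, map_one]
  rw [← orderOf_eq_one_iff]
  exact Nat.eq_one_of_dvd_coprimes hH (H.orderOf_dvd_natCard hg) (orderOf_dvd_of_pow_eq_one h5)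

theorem chi4_of_card_five (H : Subgroup F20) (hH : Nat.card H = 5) (g : F20) (hg : g ∈ H)
    (hg1 : g ≠ 1) : chi4 g = -1 := by
  have hu : g.right = 1 := by
    have h5 : SemidirectProduct.rightHom g ^ 5 = 1 := by
      rw [← map_pow, orderOf_dvd_iff_pow_eq_one.1 ((H.orderOf_dvd_natCard hg).trans hH.dvd),
        map_one]
    have h4 : g.right ^ 4 = 1 := by
      have := ZMod.pow_totient g.right
      rwa [Nat.totient_prime (show Nat.Prime 5 by norm_num)] at this
    have h5' : g.right ^ 5 = 1 := h5
    rwa [pow_succ, h4, one_mul] at h5'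
  have ha : g.left ≠ 1 := fun ha => hg1 (SemidirectProduct.ext ha hu)
  rw [chi4, if_pos hu, if_neg ha]
/-- A function supported at `1` is a multiple of the regular character. -/
theorem charInner_of_eq_zero {H : Type} [Group H] [Finite H] (f : H → ℂ)
    (hf : ∀ h, h ≠ 1 → f h = 0) (W : FDRep ℂ H) :
    charInner H f W.character = f 1 * Module.finrank ℂ W / Nat.card H := by
  rw [charInner, finsum_eq_single _ 1 fun h hh => by rw [hf h hh, zero_mul], FDRep.char_one,
    map_natCast]
  ring

theorem not_strongGelfand_of_card_le_two (H : Subgroup F20) (hH : Nat.card H ≤ 2) :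
    ¬ IsStrongGelfandPair F20 H := by
  intro hs
  have hpos : 0 < Nat.card H := Nat.card_pos
  have hcop : (Nat.card H).Coprime 5 := by
    interval_cases Nat.card H <;> norm_num
  have h := hs chi4 (linRep (1 : H →* ℂ)).character ⟨_, rho4_simple, rho4_character.symm⟩
    ⟨_, linRep_simple _, rfl⟩
  have hd : (Module.finrank ℂ (linRep (1 : H →* ℂ)) : ℂ) = 1 := by
    rw [← FDRep.char_one, linRep_character, map_one]
  rw [charInner_of_eq_zero _ fun (x : H) hx => chi4_of_coprime H hcop x x.2 fun h => hx (Subtype.ext h),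
    hd, OneMemClass.coe_one, chi4_one] at h
  interval_cases Nat.card H <;> norm_num at h

theorem comm_of_card {H : Type} [Group H] (hH : Nat.card H = 4 ∨ Nat.card H = 5) (x y : H) :
    x * y = y * x := by
  rcases hH with h | h
  · have : Fact (Nat.Prime 2) := ⟨Nat.prime_two⟩
    have := IsPGroup.isMulCommutative_of_card_eq_prime_sq (p := 2) (G := H) (by rw [h]; norm_num)
    exact this.is_comm.comm x y
  · have : Fact (Nat.Prime 5) := ⟨by norm_num⟩
    have := isCyclic_of_prime_card h
    exact IsCyclic.commGroup.mul_comm x y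

theorem charInner_chi4_le_one (H : Subgroup F20) (hH : Nat.card H = 4 ∨ Nat.card H = 5)
    (W : FDRep ℂ H) [Simple W] (m : ℕ)
    (hm : charInner H (fun h : H => chi4 h) W.character = m) : m ≤ 1 := by
  have hW : Module.finrank ℂ W = 1 := finrank_eq_one_of_comm (comm_of_card hH) W
  rcases hH with h | h
  · rw [charInner_of_eq_zero _ fun (x : H) hx =>
      chi4_of_coprime H (by rw [h]; norm_num) x x.2 fun h => hx (Subtype.ext h),
      hW, h, OneMemClass.coe_one, chi4_one] at hm
    norm_num at hm
    have hm1 : m = 1 := by exact_mod_cast hm.symm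
    omega
  -- For `|H| = 5` the regular character is `chi4 + 1`.
  · have h1 := charInner_of_eq_zero (fun x : H => chi4 x + 1) (fun x hx => by
      rw [chi4_of_card_five H h x x.2 fun h => hx (Subtype.ext h)]; norm_num) W
    have h2 := charInner_eq_finrank (linRep (1 : H →* ℂ)) W
    have h3 : charInner H (fun x : H => chi4 x + 1) W.character =
        charInner H (fun h : H => chi4 h) W.character +
          charInner H (linRep (1 : H →* ℂ)).character W.character := by
      have := Fintype.ofFinite H
      simp only [charInner, finsum_eq_sum_of_fintype]
      rw [← mul_add, ← Finset.sum_add_distrib]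
      congr 1
      refine Finset.sum_congr rfl fun x _ => ?_
      rw [linRep_character, ← add_mul]
      rfl
    rw [hm, h1, h2, hW, h, OneMemClass.coe_one, chi4_one] at h3
    have h4 : 1 = m + Module.finrank ℂ (W ⟶ linRep (1 : H →* ℂ)) := by
      norm_num at h3
      exact_mod_cast h3
    omega

end F20

/-- The strong Gelfand subgroups of `Sz(2) ≅ F₂₀` are exactly `F₂₀` itself, the subgroup
`D₁₀` of order 10, the subgroup `C₅` of order 5, and the subgroups `C₄` of order 4;
equivalently, `(F₂₀, H)` is a strong Gelfand pair iff `|H| ∈ {4, 5, 10, 20}`. -/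
theorem strongGelfandPair_F20_iff (H : Subgroup F20) :
    IsStrongGelfandPair F20 H ↔ Nat.card H ∈ ({4, 5, 10, 20} : Set ℕ) := by
  have hpos : 0 < Nat.card H := Nat.card_pos
  constructor
  · intro hs
    have hdvd : Nat.card H ∣ 20 := card_F20 ▸ Subgroup.card_subgroup_dvd_card H
    have hgt : 2 < Nat.card H := by
      by_contra hle
      exact not_strongGelfand_of_card_le_two H (not_lt.1 hle) hs
    have hle := Nat.le_of_dvd (by norm_num) hdvd
    simp only [Set.mem_insert_iff, Set.mem_singleton_iff]
    interval_cases Nat.card H <;> omega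
  · rintro hH _ _ ⟨V, hV, rfl⟩ ⟨W, hW, rfl⟩
    have := Fintype.ofFinite H
    set m := Module.finrank ℂ (W ⟶ resRep H V)
    have hm : charInner H (fun h : H => V.character h) W.character = m :=
      charInner_eq_finrank (resRep H V) W
    have hsq : (m : ℝ) ^ 2 * Nat.card H ≤ ∑ h : H, Complex.normSq (V.character h) :=
      finrank_sq_mul_card_le (resRep H V) W
    suffices hm1 : m ≤ 1 by
      rw [hm]
      interval_cases m <;> simp
    have hsum : ∑ h : H, Complex.normSq (V.character h) ≤ 20 := by
      have h20 := sum_normSq_of_simple V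
      rw [card_F20] at h20
      calc ∑ h : H, Complex.normSq (V.character h)
          = ∑ g ∈ Finset.univ.map (Function.Embedding.subtype (· ∈ H)),
              Complex.normSq (V.character g) := by rw [Finset.sum_map]; rfl
        _ ≤ ∑ g : F20, Complex.normSq (V.character g) :=
            Finset.sum_le_sum_of_subset_of_nonneg (Finset.subset_univ _)
              fun g _ _ => Complex.normSq_nonneg _
        _ = 20 := by rw [h20]; norm_num
    by_cases hbig : 10 ≤ Nat.card H
    · have h10 : (10 : ℝ) ≤ Nat.card H := by exact_mod_cast hbig
      by_contra hlt
      have hm2 : (2 : ℝ) ≤ m := by exact_mod_cast not_le.1 hlt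
      nlinarith
    have h45 : Nat.card H = 4 ∨ Nat.card H = 5 := by
      simp only [Set.mem_insert_iff, Set.mem_singleton_iff] at hH
      omega
    rcases normSq_char_or_eq_chi4 V with hlin | hchi
    · simp only [hlin, Finset.sum_const, Finset.card_univ, nsmul_eq_mul, mul_one,
        ← Nat.card_eq_fintype_card] at hsq
      have hsq' : m ^ 2 * Nat.card H ≤ 1 * Nat.card H := by rw [one_mul]; exact_mod_cast hsq
      have := Nat.le_of_mul_le_mul_right hsq' hpos
      nlinarith
    · rw [hchi] at hm
      exact charInner_chi4_le_one H h45 W m hm
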